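/- arXiv:1705.08777 — 2 statements merged into one kernel-verified Lean document; each statement's English description precedes it below -/
import Mathlib

section
/- Let S̃_8 ⊆ Sp_6(ℤ_2) denote the full preimage of the embedded copy of S_8 ⊆ Sp_6(ℤ/2ℤ) under mod-2 reduction. If H ⊆ Sp_6(ℤ_2) is a closed subgroup whose image under reduction modulo 8 equals the image of S̃_8 under reduction modulo 8, then H = S̃_8. -/
open Matrix

/-- The standard symplectic matrix `Ω`, block-diagonal with `2×2` blocks `[[0,1],[-1,0]]`. -/
def OmegaMat (g : ℕ) (R : Type) [CommRing R] : Matrix (Fin (2*g)) (Fin (2*g)) R :=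
  Matrix.of fun i j =>
    if (i : ℕ) + 1 = (j : ℕ) ∧ (j : ℕ) % 2 = 1 then 1
    else if (j : ℕ) + 1 = (i : ℕ) ∧ (i : ℕ) % 2 = 1 then -1 else 0

/-- The symplectic group `Sp_{2g}(R)`, as a set of invertible matrices:
those `S` with `SᵀΩS = Ω`. -/
def SpSet (g : ℕ) (R : Type) [CommRing R] : Set (GL (Fin (2*g)) R) :=
  {S | (S : Matrix (Fin (2*g)) (Fin (2*g)) R)ᵀ * OmegaMat g R * S = OmegaMat g R}

/-- The general symplectic group `GSp_{2g}(R)`, as a set of invertible matrices: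
those `S` with `SᵀΩS = m·Ω` for some unit `m` (the multiplier). -/
def GSpSet (g : ℕ) (R : Type) [CommRing R] : Set (GL (Fin (2*g)) R) :=
  {S | ∃ m : Rˣ, (S : Matrix (Fin (2*g)) (Fin (2*g)) R)ᵀ * OmegaMat g R * S = (m : R) • OmegaMat g R}

/-- The all-ones vector `t ∈ V = (ℤ/2ℤ)^{2g+2}`. -/
def tvec (g : ℕ) : Fin (2*g+2) → ZMod 2 := fun _ => 1

/-- The line spanned by `t`. -/
def tline (g : ℕ) : Submodule (ZMod 2) (Fin (2*g+2) → ZMod 2) :=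
  Submodule.span (ZMod 2) {tvec g}

/-- `t^⊥`: the vectors of `V` orthogonal to `t` for the standard bilinear form
`⟨u,v⟩ = ∑ uᵢvᵢ`, i.e. those whose coordinates sum to zero. -/
def tperp (g : ℕ) : Set (Fin (2*g+2) → ZMod 2) := {v | ∑ i, v i = 0}

/-- The matrix of the map `ψ : M → V` sending the symplectic basis vector `f_{1,n}`
(column `2n-2`, 0-based) of `M = (ℤ/2ℤ)^{2g}` to `ē_1 + ⋯ + ē_{2n}` and `f_{2,n}`
(column `2n-1`) to `ē_{2n+1} + ē_1 + ⋯ + ē_{2n-1}`; `ψ` composed with the quotient map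
`t^⊥ → W = t^⊥/span(t)` is the identification of `M` with `W` used to realize the
isometries of `W` as the matrix group `Sp_{2g}(ℤ/2ℤ)`. -/
def PsiMat (g : ℕ) : Matrix (Fin (2*g+2)) (Fin (2*g)) (ZMod 2) :=
  Matrix.of fun k j =>
    if (j : ℕ) % 2 = 0 then (if (k : ℕ) < (j : ℕ) + 2 then 1 else 0)
    else (if (k : ℕ) < (j : ℕ) ∨ (k : ℕ) = (j : ℕ) + 1 then 1 else 0)

/-- The permutation matrix of `σ`, acting on coordinates of `V`: `(P_σ v) k = v (σ⁻¹ k)`. -/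
def permMat (g : ℕ) (σ : Equiv.Perm (Fin (2*g+2))) :
    Matrix (Fin (2*g+2)) (Fin (2*g+2)) (ZMod 2) :=
  Matrix.of fun k j => if σ j = k then 1 else 0

/-- `A ∈ Sp_{2g}(ℤ/2ℤ)` is the matrix (w.r.t. the symplectic basis carried by `ψ`) of the
action of the permutation `σ ∈ S_{2g+2}` on `W = t^⊥/span(t)`: this says that each column of
`Ψ·A − P_σ·Ψ` lies in `span(t)`, i.e. `ψ(A·m) ≡ σ·ψ(m) mod t` for every `m ∈ M`.
The embedded copy of `S_{2g+2}` inside `Sp_{2g}(ℤ/2ℤ)` is the set of matrices representing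
some permutation in this sense. -/
def representsPerm (g : ℕ) (A : Matrix (Fin (2*g)) (Fin (2*g)) (ZMod 2))
    (σ : Equiv.Perm (Fin (2*g+2))) : Prop :=
  ∀ j, (fun k => (PsiMat g * A - permMat g σ * PsiMat g) k j) ∈ tline g

/-- Entrywise mod-2 reduction `GL_{2g}(ℤ_2) → GL_{2g}(ℤ/2ℤ)`. -/
noncomputable def redMod2 (g : ℕ) : GL (Fin (2*g)) ℤ_[2] →* GL (Fin (2*g)) (ZMod 2) :=
  Units.map ((PadicInt.toZMod).mapMatrix.toMonoidHom)

/-- Entrywise mod-8 reduction `GL_6(ℤ_2) → GL_6(ℤ/8ℤ)`. -/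
noncomputable def redMod8 (g : ℕ) : GL (Fin (2*g)) ℤ_[2] →* GL (Fin (2*g)) (ZMod (2^3)) :=
  Units.map ((PadicInt.toZModPow 3).mapMatrix.toMonoidHom)

/-- The subgroup `S̃_8 ⊆ Sp_6(ℤ_2)`: the full preimage of the embedded copy of
`S_8 ⊆ Sp_6(ℤ/2ℤ)` under mod-2 reduction, as a set. -/
noncomputable def StildeSet : Set (GL (Fin (2*3)) ℤ_[2]) :=
  {x | x ∈ SpSet 3 ℤ_[2] ∧ ∃ σ : Equiv.Perm (Fin (2*3+2)),
    representsPerm 3 ((redMod2 3 x : GL (Fin (2*3)) (ZMod 2))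
      : Matrix (Fin (2*3)) (Fin (2*3)) (ZMod 2)) σ}

/-!
Write `Γ` for the isometries of the form `J` over `ℤ_2` that are trivial mod `2`. It suffices that
`Γ ≤ H`, and since `H` is closed, that every `x ∈ Γ` is congruent to an element of `H` modulo each
power of `2`. Suppose this holds mod `2 ^ (k + 3)`, and let `h ∈ H` approximate `x` to that level.
Then `y = h⁻¹ * x` is trivial mod `2 ^ (k + 3)`, and the Padé approximant
`z = (3 * y + 1) * (y + 3)⁻¹` of the square root of `y` has two virtues: `z ^ 2 ≡ y` mod
`2 ^ (k + 4)`, and `z` is again an isometry, because `t ↦ (3 * t + 1) / (t + 3)` commutes with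
`t ↦ t⁻¹`. Moreover `z ∈ Γ`, so some `a ∈ H` agrees with `z` mod `2 ^ (k + 3)`; squaring gains a
factor `2`, so `h * a ^ 2 ∈ H` agrees with `x` mod `2 ^ (k + 4)`.
-/

theorem dvd_mul_of_commute_of_dvd {M : Type*} [Monoid M] {a b c : M} (hac : Commute a c)
    (hab : a ∣ b) : a ∣ c * b := by
  obtain ⟨d, rfl⟩ := hab
  exact ⟨c * d, hac.symm.left_comm d⟩

section Ring

variable {A : Type*} [Ring A]

theorem commute_two_pow_left (k : ℕ) (a : A) : Commute (2 ^ k) a :=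
  (Commute.ofNat_left 2 a).pow_left k

theorem two_dvd_of_two_pow_succ_dvd {k : ℕ} {a : A} (h : 2 ^ (k + 1) ∣ a) : 2 ∣ a :=
  (dvd_pow_self 2 k.succ_ne_zero).trans h

theorem two_pow_dvd_sq_sub_sq {k : ℕ} {a z : A} (hz : 2 ∣ z - 1) (haz : 2 ^ (k + 1) ∣ a - z) :
    2 ^ (k + 2) ∣ a ^ 2 - z ^ 2 := by
  have ha : 2 ∣ a - 1 := by
    simpa only [sub_add_sub_cancel] using dvd_add (two_dvd_of_two_pow_succ_dvd haz) hz
  obtain ⟨e, he⟩ := haz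
  have hsum : 2 ∣ (a - 1) * e + e * (z - 1) + 2 * e :=
    dvd_add (dvd_add (ha.mul_right e) (dvd_mul_of_commute_of_dvd (Commute.ofNat_left 2 e) hz))
      (dvd_mul_right 2 e)
  have hfactor : a ^ 2 - z ^ 2 = 2 ^ (k + 1) * ((a - 1) * e + e * (z - 1) + 2 * e) :=
    calc a ^ 2 - z ^ 2 = a * (a - z) + (a - z) * z := by noncomm_ring
      _ = 2 ^ (k + 1) * (a * e) + 2 ^ (k + 1) * (e * z) := by
        rw [he, (commute_two_pow_left (k + 1) a).symm.left_comm, mul_assoc]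
      _ = _ := by rw [← mul_add]; congr 1; noncomm_ring
  rw [hfactor, pow_succ 2 (k + 1)]
  exact mul_dvd_mul_left _ hsum

/-- With `y = 1 + 4 * b`, the element `(1 + 3 * b) * (1 + b)⁻¹` is `(3 * y + 1) * (y + 3)⁻¹`. -/
theorem sq_pade_sub (b : A) (u : Aˣ) (hu : (u : A) = 1 + b) :
    ((1 + 3 * b) * ↑u⁻¹) ^ 2 - (1 + 4 * b) = -4 * b ^ 3 * ↑u⁻¹ ^ 2 := by
  have hcomm : Commute (1 + 3 * b) (u : A) := by
    rw [hu, Commute, SemiconjBy]; noncomm_ring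
  have hinv : (u : A) ^ 2 * ↑u⁻¹ ^ 2 = 1 := by
    rw [← (Commute.refl (u : A)).units_inv_right.mul_pow, u.mul_inv, one_pow]
  calc ((1 + 3 * b) * ↑u⁻¹) ^ 2 - (1 + 4 * b)
      = ((1 + 3 * b) ^ 2 - (1 + 4 * b) * (u : A) ^ 2) * ↑u⁻¹ ^ 2 := by
        rw [hcomm.units_inv_right.mul_pow, sub_mul, mul_assoc (1 + 4 * b), hinv, mul_one]
    _ = -4 * b ^ 3 * ↑u⁻¹ ^ 2 := by rw [hu]; congr 1; noncomm_ring

theorem two_pow_dvd_sq_pade_sub {k : ℕ} {b : A} (hb : 2 ^ (k + 1) ∣ b) (u : Aˣ)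
    (hu : (u : A) = 1 + b) :
    2 ^ (k + 4) ∣ ((1 + 3 * b) * ↑u⁻¹) ^ 2 - (1 + 4 * b) := by
  rw [sq_pade_sub b u hu]
  refine Dvd.dvd.mul_right ?_ _
  obtain ⟨c, rfl⟩ := hb
  have hpow : -4 * (2 ^ (k + 1) * c) ^ 3 = 2 ^ (3 * k + 5) * -c ^ 3 := by
    rw [(commute_two_pow_left (k + 1) c).mul_pow, ← pow_mul,
      show 3 * k + 5 = 2 + (k + 1) * 3 by ring, pow_add]
    noncomm_ring
  rw [hpow]
  exact (pow_dvd_pow 2 (by omega)).mul_right _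

end Ring

section Isometry

variable {n R : Type*} [Fintype n] [CommRing R]

theorem congruence_mul (J x y : Matrix n n R) :
    (x * y)ᵀ * J * (x * y) = yᵀ * (xᵀ * J * x) * y := by
  simp only [transpose_mul, mul_assoc]

variable [DecidableEq n]

theorem congruence_inv_congruence (J : Matrix n n R) (x : GL n R) :
    x⁻¹.valᵀ * (x.valᵀ * J * x.val) * x⁻¹.val = J := by
  rw [← congruence_mul, x.mul_inv, transpose_one, one_mul, mul_one]

/-- The invertible matrices preserving the bilinear form with Gram matrix `J`; for
`J = OmegaMat g R` this is `Sp_{2g}(R)`. No condition is imposed on `J`. -/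
def isometryGroup (J : Matrix n n R) : Subgroup (GL n R) where
  carrier := {S | (S : Matrix n n R)ᵀ * J * S = J}
  one_mem' := by simp
  mul_mem' := by
    intro x y (hx : _ = J) (hy : _ = J)
    change (x.val * y.val)ᵀ * J * (x.val * y.val) = J
    rw [congruence_mul, hx, hy]
  inv_mem' := by
    intro x (hx : _ = J)
    change x⁻¹.valᵀ * J * x⁻¹.val = J
    simpa only [hx] using congruence_inv_congruence J x

variable {J : Matrix n n R}

theorem mul_inv_mem_isometryGroup {x y : GL n R}
    (h : x.valᵀ * J * x.val = y.valᵀ * J * y.val) : x * y⁻¹ ∈ isometryGroup J := by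
  change (x.val * y⁻¹.val)ᵀ * J * (x.val * y⁻¹.val) = J
  rw [congruence_mul, h, congruence_inv_congruence]

theorem congruence_one_add_three_mul (h2 : IsLeftRegular (2 : R)) {B : Matrix n n R}
    (hB : (1 + 4 * B)ᵀ * J * (1 + 4 * B) = J) :
    (1 + 3 * B)ᵀ * J * (1 + 3 * B) = (1 + B)ᵀ * J * (1 + B) := by
  have hdouble : (2 : R) • ((1 + 3 * B)ᵀ * J * (1 + 3 * B) - (1 + B)ᵀ * J * (1 + B)) = 0 :=
    calc _ = (1 + 4 * B)ᵀ * J * (1 + 4 * B) - J := by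
          simp only [transpose_add, transpose_one, transpose_mul, transpose_ofNat,
            ofNat_smul_eq_nsmul]
          noncomm_ring
      _ = 0 := sub_eq_zero.mpr hB
  refine sub_eq_zero.mp (Matrix.ext fun i j => h2 ?_)
  simpa only [Matrix.smul_apply, smul_eq_mul, Matrix.zero_apply, mul_zero] using
    congr_fun₂ hdouble i j

theorem isUnit_one_add_smul {a : R} (ha : a ∈ Ideal.jacobson (⊥ : Ideal R)) (C : Matrix n n R) :
    IsUnit (1 + a • C) := by
  have hdet : a ∣ (1 + a • C).det - 1 := by
    rw [det_one_add_smul, add_assoc, add_sub_cancel_left]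
    exact dvd_add (dvd_mul_left a _) ((dvd_pow_self a two_ne_zero).mul_left _)
  obtain ⟨c, hc⟩ := hdet
  rw [isUnit_iff_isUnit_det, sub_eq_iff_eq_add.mp hc]
  exact Ideal.mem_jacobson_bot.mp ha c

theorem isUnit_of_two_dvd_sub_one (h2jac : (2 : R) ∈ Ideal.jacobson (⊥ : Ideal R))
    {M : Matrix n n R} (hM : 2 ∣ M - 1) : IsUnit M := by
  obtain ⟨C, hC⟩ := hM
  have hM' : M = 1 + (2 : R) • C := by
    rw [ofNat_smul_eq_nsmul, nsmul_eq_mul, Nat.cast_ofNat, ← hC, add_sub_cancel]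
  rw [hM']
  exact isUnit_one_add_smul h2jac C

theorem exists_mem_isometryGroup_two_pow_dvd_sq_sub (h2 : IsLeftRegular (2 : R))
    (h2jac : (2 : R) ∈ Ideal.jacobson (⊥ : Ideal R)) {k : ℕ} {y : GL n R}
    (hy : y ∈ isometryGroup J) (hyk : 2 ^ (k + 3) ∣ y.val - 1) :
    ∃ z ∈ isometryGroup J, 2 ∣ z.val - 1 ∧ 2 ^ (k + 4) ∣ z.val ^ 2 - y.val := by
  obtain ⟨C, hC⟩ := hyk
  set B := 2 ^ (k + 1) * C
  have hB : 2 ^ (k + 1) ∣ B := dvd_mul_right _ C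
  have hyB : y.val = 1 + 4 * B := by
    have hpow : (2 : Matrix n n R) ^ (k + 3) = 4 * 2 ^ (k + 1) := by
      rw [show k + 3 = 2 + (k + 1) by omega, pow_add]
      norm_num
    rw [← sub_eq_iff_eq_add', hC, hpow, mul_assoc]
  have h2B : 2 ∣ B := two_dvd_of_two_pow_succ_dvd hB
  obtain ⟨u, hu⟩ := isUnit_of_two_dvd_sub_one h2jac (M := 1 + B) (by rwa [add_sub_cancel_left])
  obtain ⟨v, hv⟩ := isUnit_of_two_dvd_sub_one h2jac (M := 1 + 3 * B) (by
    rw [add_sub_cancel_left]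
    exact dvd_mul_of_commute_of_dvd (Commute.ofNat_left 2 3) h2B)
  have hz : v.val * u⁻¹.val - 1 = 2 * (B * u⁻¹.val) := by
    rw [sub_eq_iff_eq_add, ← u.mul_inv, hv, hu]
    noncomm_ring
  refine ⟨v * u⁻¹, mul_inv_mem_isometryGroup ?_, ⟨_, hz⟩, ?_⟩
  · rw [hu, hv]
    exact congruence_one_add_three_mul h2 (hyB ▸ hy)
  · simpa only [Units.val_mul, hv, hyB] using two_pow_dvd_sq_pade_sub hB u hu

theorem exists_mem_two_pow_dvd_sub (h2 : IsLeftRegular (2 : R))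
    (h2jac : (2 : R) ∈ Ideal.jacobson (⊥ : Ideal R)) {H : Subgroup (GL n R)}
    (hH : H ≤ isometryGroup J)
    (h8 : ∀ x ∈ isometryGroup J, 2 ∣ x.val - 1 → ∃ h ∈ H, 2 ^ 3 ∣ h.val - x.val) (k : ℕ) :
    ∀ x ∈ isometryGroup J, 2 ∣ x.val - 1 → ∃ h ∈ H, 2 ^ (k + 3) ∣ h.val - x.val := by
  induction k with
  | zero => simpa only [zero_add] using h8
  | succ k ih =>
    intro x hx hx2
    obtain ⟨h, hhH, hhx⟩ := ih x hx hx2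
    have hy : 2 ^ (k + 3) ∣ (h⁻¹ * x).val - 1 := by
      have := dvd_mul_of_commute_of_dvd (commute_two_pow_left (k + 3) (-h⁻¹.val)) hhx
      rwa [neg_mul, mul_sub, h.inv_mul, neg_sub] at this
    obtain ⟨z, hz, hz2, hzy⟩ := exists_mem_isometryGroup_two_pow_dvd_sq_sub h2 h2jac
      (mul_mem (inv_mem (hH hhH)) hx) hy
    obtain ⟨a, haH, haz⟩ := ih z hz hz2
    refine ⟨h * a ^ 2, mul_mem hhH (pow_mem haH 2), ?_⟩
    have hay : 2 ^ (k + 4) ∣ a.val ^ 2 - (h⁻¹ * x).val := by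
      simpa only [sub_add_sub_cancel] using dvd_add (two_pow_dvd_sq_sub_sq hz2 haz) hzy
    have := dvd_mul_of_commute_of_dvd (commute_two_pow_left (k + 4) h.val) hay
    rwa [mul_sub, Units.val_mul, Units.mul_inv_cancel_left] at this

end Isometry

section Reduction

variable {n R S : Type*} [Fintype n] [DecidableEq n] [CommRing R] [CommRing S]

theorem map_eq_map_iff_natCast_dvd_sub {f : R →+* S} {m : ℕ}
    (hf : RingHom.ker f = Ideal.span {(m : R)}) {x y : GL n R} :
    GeneralLinearGroup.map f x = GeneralLinearGroup.map f y ↔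
      (m : Matrix n n R) ∣ x.val - y.val := by
  have hentry (i j : n) : f (x i j) = f (y i j) ↔ (m : R) ∣ x i j - y i j := by
    rw [← sub_eq_zero, ← map_sub, ← RingHom.mem_ker, hf, Ideal.mem_span_singleton]
  have hmul (C : Matrix n n R) (i j : n) : ((m : Matrix n n R) * C) i j = m * C i j := by
    rw [← nsmul_eq_mul, Matrix.smul_apply, nsmul_eq_mul]
  calc _ ↔ ∀ i j, ∃ c, x i j - y i j = m * c := by
        simp only [GeneralLinearGroup.ext_iff, GeneralLinearGroup.map_apply, hentry, dvd_def]
    _ ↔ ∃ C : Matrix n n R, ∀ i j, x i j - y i j = m * C i j := by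
        simp only [Classical.skolem]
        rfl
    _ ↔ (m : Matrix n n R) ∣ x.val - y.val := by
        simp only [dvd_def, ← Matrix.ext_iff, hmul, Matrix.sub_apply]

end Reduction

section Padic

open Filter PadicInt Topology

variable {p : ℕ} [Fact p.Prime] {n : Type*} [Fintype n] [DecidableEq n]

theorem map_toZMod_eq_iff_dvd_sub {x y : GL n ℤ_[p]} :
    GeneralLinearGroup.map toZMod x = GeneralLinearGroup.map toZMod y ↔
      (p : Matrix n n ℤ_[p]) ∣ x.val - y.val :=
  map_eq_map_iff_natCast_dvd_sub (ker_toZMod.trans maximalIdeal_eq_span_p)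

theorem map_toZModPow_eq_iff_dvd_sub {k : ℕ} {x y : GL n ℤ_[p]} :
    GeneralLinearGroup.map (toZModPow k) x = GeneralLinearGroup.map (toZModPow k) y ↔
      (p : Matrix n n ℤ_[p]) ^ k ∣ x.val - y.val := by
  rw [← Nat.cast_pow]
  exact map_eq_map_iff_natCast_dvd_sub (by rw [ker_toZModPow, Nat.cast_pow])

theorem map_toZMod_eq_of_map_toZModPow_eq {k : ℕ} (hk : k ≠ 0) {x y : GL n ℤ_[p]}
    (h : GeneralLinearGroup.map (toZModPow k) x = GeneralLinearGroup.map (toZModPow k) y) :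
    GeneralLinearGroup.map toZMod x = GeneralLinearGroup.map toZMod y :=
  map_toZMod_eq_iff_dvd_sub.mpr ((dvd_pow_self _ hk).trans (map_toZModPow_eq_iff_dvd_sub.mp h))

theorem tendsto_of_toZModPow_eq {f : ℕ → ℤ_[p]} {x : ℤ_[p]}
    (h : ∀ k, toZModPow k (f k) = toZModPow k x) :
    Tendsto f atTop (𝓝 x) := by
  have hnorm (k : ℕ) : ‖f k - x‖ ≤ ((p : ℝ)⁻¹) ^ k := by
    rw [inv_pow, ← zpow_natCast, ← _root_.zpow_neg, norm_le_pow_iff_mem_span_pow,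
      ← ker_toZModPow, RingHom.mem_ker, map_sub, h k, sub_self]
  have hp : (p : ℝ)⁻¹ < 1 := inv_lt_one_of_one_lt₀ (mod_cast (Fact.out : p.Prime).one_lt)
  exact tendsto_iff_norm_sub_tendsto_zero.mpr <| squeeze_zero (fun _ => norm_nonneg _) hnorm
    (tendsto_pow_atTop_nhds_zero_of_lt_one (by positivity) hp)

theorem tendsto_of_map_toZModPow_eq {f : ℕ → GL n ℤ_[p]} {x : GL n ℤ_[p]}
    (h : ∀ k, GeneralLinearGroup.map (toZModPow k) (f k) = GeneralLinearGroup.map (toZModPow k) x) :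
    Tendsto f atTop (𝓝 x) := by
  have hval {g : ℕ → GL n ℤ_[p]} {y : GL n ℤ_[p]}
      (hg : ∀ k, GeneralLinearGroup.map (toZModPow k) (g k) =
        GeneralLinearGroup.map (toZModPow k) y) :
      Tendsto (fun k => (g k).val) atTop (𝓝 y.val) :=
    tendsto_pi_nhds.mpr fun i => tendsto_pi_nhds.mpr fun j =>
      tendsto_of_toZModPow_eq fun k => by
        simpa only [GeneralLinearGroup.map_apply] using congr_arg (fun M => M i j) (hg k)
  have hinv : Tendsto (fun k => (f k)⁻¹.val) atTop (𝓝 x⁻¹.val) :=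
    hval fun k => by rw [map_inv, map_inv, h k]
  exact Units.isEmbedding_embedProduct.tendsto_nhds_iff.mpr <|
    (hval h).prodMk_nhds ((MulOpposite.continuous_op.tendsto _).comp hinv)

theorem mem_of_isClosed_of_forall_exists_map_toZModPow_eq {s : Set (GL n ℤ_[p])}
    (hs : IsClosed s) {x : GL n ℤ_[p]}
    (h : ∀ k, ∃ y ∈ s, GeneralLinearGroup.map (toZModPow k) y =
      GeneralLinearGroup.map (toZModPow k) x) :
    x ∈ s := by
  choose f hfs hfx using h
  exact hs.mem_of_tendsto (tendsto_of_map_toZModPow_eq hfx) (.of_forall hfs)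

end Padic

section TwoAdic

open PadicInt

variable {n : Type*} [Fintype n] [DecidableEq n]

theorem mem_of_isClosed_of_forall_exists_mod_eight {J : Matrix n n ℤ_[2]}
    {H : Subgroup (GL n ℤ_[2])} (hclosed : IsClosed (H : Set (GL n ℤ_[2])))
    (hH : H ≤ isometryGroup J)
    (h8 : ∀ x ∈ isometryGroup J, GeneralLinearGroup.map toZMod x = 1 →
      ∃ h ∈ H, GeneralLinearGroup.map (toZModPow 3) h = GeneralLinearGroup.map (toZModPow 3) x)
    {x : GL n ℤ_[2]} (hx : x ∈ isometryGroup J)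
    (hx2 : GeneralLinearGroup.map toZMod x = 1) : x ∈ H := by
  have dvd_iff {y : GL n ℤ_[2]} :
      GeneralLinearGroup.map toZMod y = 1 ↔ 2 ∣ y.val - 1 := by
    simpa using map_toZMod_eq_iff_dvd_sub (x := y) (y := 1)
  have hjac : (2 : ℤ_[2]) ∈ Ideal.jacobson (⊥ : Ideal ℤ_[2]) := by
    rw [IsLocalRing.jacobson_eq_maximalIdeal ⊥ bot_ne_top, maximalIdeal_eq_span_p]
    exact Ideal.mem_span_singleton_self _
  have h8dvd : ∀ y ∈ isometryGroup J, 2 ∣ y.val - 1 → ∃ h ∈ H, 2 ^ 3 ∣ h.val - y.val := by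
    simpa only [dvd_iff, map_toZModPow_eq_iff_dvd_sub, Nat.cast_ofNat] using h8
  refine mem_of_isClosed_of_forall_exists_map_toZModPow_eq hclosed fun k => ?_
  obtain ⟨h, hhH, hhx⟩ := exists_mem_two_pow_dvd_sub (IsRegular.of_ne_zero two_ne_zero).left
    hjac hH h8dvd k x hx (dvd_iff.mp hx2)
  refine ⟨h, hhH, map_toZModPow_eq_iff_dvd_sub.mpr ?_⟩
  exact mod_cast (pow_dvd_pow 2 (k.le_add_right 3)).trans hhx

theorem maximal_monodromy_stmt14_general (J : Matrix n n ℤ_[2]) (T : Set (GL n (ZMod 2)))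
    (H : Subgroup (GL n ℤ_[2]))
    (hclosed : IsClosed (H : Set (GL n ℤ_[2]))) (hH : H ≤ isometryGroup J)
    (himg : GeneralLinearGroup.map (toZModPow 3) '' (H : Set (GL n ℤ_[2])) =
      GeneralLinearGroup.map (toZModPow 3) ''
        {x | x ∈ isometryGroup J ∧ GeneralLinearGroup.map toZMod x ∈ T}) :
    (H : Set (GL n ℤ_[2])) =
      {x | x ∈ isometryGroup J ∧ GeneralLinearGroup.map toZMod x ∈ T} := by
  have hT {h : GL n ℤ_[2]} (hh : h ∈ H) : GeneralLinearGroup.map toZMod h ∈ T := by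
    obtain ⟨s, ⟨-, hs⟩, hsh⟩ := himg.subset (Set.mem_image_of_mem _ hh)
    rwa [← map_toZMod_eq_of_map_toZModPow_eq three_ne_zero hsh]
  have hlift {x : GL n ℤ_[2]} (hx : x ∈ isometryGroup J)
      (hxT : GeneralLinearGroup.map toZMod x ∈ T) :
      ∃ h ∈ H, GeneralLinearGroup.map (toZModPow 3) h = GeneralLinearGroup.map (toZModPow 3) x :=
    himg.superset (Set.mem_image_of_mem _ ⟨hx, hxT⟩)
  have h1T : (1 : GL n (ZMod 2)) ∈ T := by simpa only [map_one] using hT H.one_mem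
  refine Set.Subset.antisymm (fun h hh => ⟨hH hh, hT hh⟩) ?_
  rintro x ⟨hx, hxT⟩
  obtain ⟨h, hhH, hhx⟩ := hlift hx hxT
  have hy : h⁻¹ * x ∈ H := by
    refine mem_of_isClosed_of_forall_exists_mod_eight hclosed hH
      (fun z hz hz1 => hlift hz (hz1 ▸ h1T)) (mul_mem (inv_mem (hH hhH)) hx) ?_
    rw [map_mul, map_inv, map_toZMod_eq_of_map_toZModPow_eq three_ne_zero hhx, inv_mul_cancel]
  exact (H.mul_mem_cancel_left (H.inv_mem hhH)).mp hy

end TwoAdic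

/-- If `H ⊆ Sp_6(ℤ_2)` is a closed subgroup whose image under reduction modulo `8` equals
the image of `S̃_8` under reduction modulo `8`, then `H = S̃_8`. -/
theorem maximal_monodromy_stmt14
    (H : Subgroup (GL (Fin (2*3)) ℤ_[2]))
    (hclosed : IsClosed (H : Set (GL (Fin (2*3)) ℤ_[2])))
    (hSp : (H : Set (GL (Fin (2*3)) ℤ_[2])) ⊆ SpSet 3 ℤ_[2])
    (himg : redMod8 3 '' (H : Set (GL (Fin (2*3)) ℤ_[2])) = redMod8 3 '' StildeSet) :
    (H : Set (GL (Fin (2*3)) ℤ_[2])) = StildeSet := by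
  exact maximal_monodromy_stmt14_general (OmegaMat 3 ℤ_[2])
    {A | ∃ σ : Equiv.Perm (Fin (2 * 3 + 2)), representsPerm 3 A.val σ} H hclosed hSp himg
end

section
/- Let n ≥ 2 and let U ⊆ ℂ^n be the set of tuples a = (a_0, …, a_{n−1}) such that the monic polynomial p_a(x) = x^n + a_{n−1}x^{n−1} + ⋯ + a_1 x + a_0 has no repeated complex root, and let Z = {a ∈ U : a_{n−1} = 0}. Define Φ : U × [0,1] → ℂ^n by letting Φ(a,t) be the coefficient vector of the monic polynomial p_a(x − t·a_{n−1}/n) (equivalently, translating each root z of p_a to z + t·a_{n−1}/n). Then Φ is a strong deformation retraction of U onto Z: Φ is continuous, Φ(a,t) ∈ U for all (a,t), Φ(a,0) = a for all a ∈ U, Φ(a,1) ∈ Z for all a ∈ U, and Φ(a,t) = a for all a ∈ Z and t ∈ [0,1]. -/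
open Polynomial

/-- The monic polynomial `p_a(x) = x^n + a_{n−1}x^{n−1} + ⋯ + a_1 x + a_0` with coefficient
vector `a ∈ ℂ^n`. -/
noncomputable def coeffPoly (n : ℕ) (a : Fin n → ℂ) : Polynomial ℂ :=
  X ^ n + ∑ i : Fin n, C (a i) * X ^ (i : ℕ)

/-- The homotopy `Φ`: `Φ(a,t)` is the coefficient vector of the monic polynomial
`p_a(x − t·a_{n−1}/n)`, i.e. each root `z` of `p_a` is translated to `z + t·a_{n−1}/n`. -/
noncomputable def retractMap (n : ℕ) (hn : 0 < n) (a : Fin n → ℂ) (t : ℝ) : Fin n → ℂ :=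
  fun i =>
    ((coeffPoly n a).comp
      (X - C ((t : ℂ) * a (⟨n - 1, by omega⟩ : Fin n) / (n : ℂ)))).coeff (i : ℕ)

/-! Translating the roots of `p_a` by `c` is the Taylor shift of `p_a` by `-c`. It is a ring
automorphism commuting with the derivative, so it preserves separability, and it moves the
subleading coefficient of a monic polynomial of degree `n` by `-n * c`. Hence the shift defining
`Φ(a, t)` multiplies `a_{n-1}` by `1 - t`, and it is trivial as soon as `t * a_{n-1} = 0`. -/

section Taylor

theorem derivative_taylor {R : Type*} [CommSemiring R] (r : R) (p : R[X]) :
    derivative (taylor r p) = taylor r (derivative p) := by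
  simp [taylor_apply, derivative_comp]

theorem separable_taylor_iff {R : Type*} [CommRing R] {r : R} {p : R[X]} :
    (taylor r p).Separable ↔ p.Separable := by
  have separable_taylor (s : R) {q : R[X]} (hq : q.Separable) : (taylor s q).Separable := by
    rw [separable_def, derivative_taylor]
    exact IsCoprime.map hq (taylorAlgHom s : R[X] →+* R[X])
  refine ⟨fun h ↦ ?_, separable_taylor r⟩
  simpa [taylor_taylor] using separable_taylor (-r) h

variable {R : Type*} [Semiring R]

theorem isMonicOfDegree_taylor {p : R[X]} {n : ℕ} (hp : IsMonicOfDegree p n) (r : R) :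
    IsMonicOfDegree (taylor r p) n :=
  ⟨(natDegree_taylor p r).trans hp.natDegree_eq, (leadingCoeff_taylor r p).trans hp.monic⟩

theorem nextCoeff_taylor (r : R) (p : R[X]) :
    (taylor r p).nextCoeff = p.nextCoeff + p.natDegree * p.leadingCoeff * r := by
  rcases Nat.eq_zero_or_pos p.natDegree with hp | hp
  · simp [nextCoeff, hp]
  have natDegree_lt : (hasseDeriv (p.natDegree - 1) p).natDegree < 2 :=
    (natDegree_hasseDeriv_le p _).trans_lt (by lia)
  have eval_hasseDeriv : (hasseDeriv (p.natDegree - 1) p).eval r =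
      p.coeff (p.natDegree - 1) + p.natDegree * p.leadingCoeff * r := by
    rw [eval_eq_sum_range' natDegree_lt, Finset.sum_range_succ, Finset.sum_range_one,
      hasseDeriv_coeff, hasseDeriv_coeff, Nat.add_sub_cancel' hp, Nat.choose_symm hp]
    simp
  rw [nextCoeff_of_natDegree_pos (by rwa [natDegree_taylor]), nextCoeff_of_natDegree_pos hp,
    natDegree_taylor, taylor_coeff, eval_hasseDeriv]

theorem continuous_coeff_taylor [TopologicalSpace R] [IsTopologicalSemiring R]
    {T : Type*} [TopologicalSpace T] {p : T → R[X]} {r : T → R} {n : ℕ}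
    (hdeg : ∀ x, (p x).natDegree ≤ n) (hp : ∀ i, Continuous fun x ↦ (p x).coeff i)
    (hr : Continuous r) (k : ℕ) : Continuous fun x ↦ (taylor (r x) (p x)).coeff k := by
  have natDegree_lt (x : T) : (hasseDeriv k (p x)).natDegree < n + 1 :=
    (natDegree_hasseDeriv_le (p x) k).trans_lt (by have := hdeg x; lia)
  simp only [taylor_coeff, fun x ↦ eval_eq_sum_range' (natDegree_lt x), hasseDeriv_coeff]
  fun_prop

end Taylor

section CoeffPoly

variable {n : ℕ}

theorem coeffPoly_eq_X_pow_add_ofFn (a : Fin n → ℂ) : coeffPoly n a = X ^ n + ofFn n a := by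
  simp only [coeffPoly, ofFn_eq_sum_monomial, C_mul_X_pow_eq_monomial]

theorem isMonicOfDegree_coeffPoly (a : Fin n → ℂ) : IsMonicOfDegree (coeffPoly n a) n := by
  rw [coeffPoly_eq_X_pow_add_ofFn]
  have monic : (X ^ n + ofFn n a).Monic := monic_X_pow_add (ofFn_degree_lt a)
  have degree_eq : (X ^ n + ofFn n a).degree = (n : WithBot ℕ) := by
    rw [degree_add_eq_left_of_degree_lt] <;> simp [ofFn_degree_lt]
  exact ⟨natDegree_eq_of_degree_eq_some degree_eq, monic⟩

theorem coeff_coeffPoly (a : Fin n → ℂ) (i : Fin n) : (coeffPoly n a).coeff i = a i := by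
  simp [coeffPoly_eq_X_pow_add_ofFn, coeff_X_pow, i.isLt.ne]

theorem coeffPoly_injective : Function.Injective (coeffPoly n) := fun a b hab ↦
  funext fun i ↦ by rw [← coeff_coeffPoly a, hab, coeff_coeffPoly]

theorem coeffPoly_coeff {p : ℂ[X]} (hp : IsMonicOfDegree p n) :
    coeffPoly n (fun i ↦ p.coeff i) = p := by
  conv_rhs => rw [hp.monic.as_sum, hp.natDegree_eq]
  rw [coeffPoly, Fin.sum_univ_eq_sum_range (fun i ↦ C (p.coeff i) * X ^ i)]

theorem nextCoeff_coeffPoly (hn : 0 < n) (a : Fin n → ℂ) :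
    (coeffPoly n a).nextCoeff = a ⟨n - 1, Nat.sub_one_lt_of_lt hn⟩ := by
  have natDegree_eq : (coeffPoly n a).natDegree = n := (isMonicOfDegree_coeffPoly a).natDegree_eq
  rw [nextCoeff_of_natDegree_pos (by rwa [natDegree_eq]), natDegree_eq]
  exact coeff_coeffPoly a ⟨n - 1, _⟩

theorem continuous_coeff_coeffPoly (k : ℕ) :
    Continuous fun a : Fin n → ℂ ↦ (coeffPoly n a).coeff k := by
  simp only [coeffPoly, coeff_add, finsetSum_coeff, coeff_C_mul]
  fun_prop

end CoeffPoly

section RetractMap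

variable {n : ℕ} (hn : 0 < n)

theorem retractMap_eq_coeff_taylor (a : Fin n → ℂ) (t : ℝ) :
    retractMap n hn a t = fun i : Fin n ↦
      (taylor (-(t * a ⟨n - 1, Nat.sub_one_lt_of_lt hn⟩ / n)) (coeffPoly n a)).coeff i := by
  funext i
  rw [retractMap, taylor_apply, C_neg, ← sub_eq_add_neg]

theorem coeffPoly_retractMap (a : Fin n → ℂ) (t : ℝ) :
    coeffPoly n (retractMap n hn a t) =
      taylor (-(t * a ⟨n - 1, Nat.sub_one_lt_of_lt hn⟩ / n)) (coeffPoly n a) := by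
  rw [retractMap_eq_coeff_taylor]
  exact coeffPoly_coeff (isMonicOfDegree_taylor (isMonicOfDegree_coeffPoly a) _)

theorem continuous_retractMap :
    Continuous fun x : (Fin n → ℂ) × ℝ ↦ retractMap n hn x.1 x.2 := by
  have continuous_shift : Continuous fun x : (Fin n → ℂ) × ℝ ↦
      -((x.2 : ℂ) * x.1 ⟨n - 1, Nat.sub_one_lt_of_lt hn⟩ / n) := by fun_prop
  have natDegree_le (x : (Fin n → ℂ) × ℝ) : (coeffPoly n x.1).natDegree ≤ n :=
    (isMonicOfDegree_coeffPoly x.1).natDegree_eq.le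
  have continuous_coeff (k : ℕ) :
      Continuous fun x : (Fin n → ℂ) × ℝ ↦ (coeffPoly n x.1).coeff k :=
    (continuous_coeff_coeffPoly k).comp continuous_fst
  simp only [retractMap_eq_coeff_taylor]
  exact continuous_pi fun i ↦
    continuous_coeff_taylor natDegree_le continuous_coeff continuous_shift i

theorem separable_coeffPoly_retractMap_iff {a : Fin n → ℂ} {t : ℝ} :
    (coeffPoly n (retractMap n hn a t)).Separable ↔ (coeffPoly n a).Separable := by
  rw [coeffPoly_retractMap, separable_taylor_iff]

theorem retractMap_zero (a : Fin n → ℂ) : retractMap n hn a 0 = a :=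
  coeffPoly_injective (by simp [coeffPoly_retractMap])

theorem retractMap_apply_last (a : Fin n → ℂ) (t : ℝ) :
    retractMap n hn a t ⟨n - 1, Nat.sub_one_lt_of_lt hn⟩ =
      (1 - t) * a ⟨n - 1, Nat.sub_one_lt_of_lt hn⟩ := by
  have hmonic := isMonicOfDegree_coeffPoly a
  have hn' : (n : ℂ) ≠ 0 := by exact_mod_cast hn.ne'
  rw [← nextCoeff_coeffPoly hn (retractMap n hn a t), coeffPoly_retractMap, nextCoeff_taylor,
    nextCoeff_coeffPoly hn, hmonic.natDegree_eq, hmonic.leadingCoeff_eq]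
  field_simp
  ring

theorem retractMap_eq_self_of_last_eq_zero {a : Fin n → ℂ}
    (ha : a ⟨n - 1, Nat.sub_one_lt_of_lt hn⟩ = 0) (t : ℝ) : retractMap n hn a t = a :=
  coeffPoly_injective (by simp [coeffPoly_retractMap, ha])

end RetractMap

theorem maximal_monodromy_stmt17_general (n : ℕ) (hn : 0 < n) :
    Continuous (fun x : (Fin n → ℂ) × ℝ ↦ retractMap n hn x.1 x.2) ∧
    (∀ a t, (coeffPoly n (retractMap n hn a t)).Separable ↔ (coeffPoly n a).Separable) ∧
    (∀ a, retractMap n hn a 0 = a) ∧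
    (∀ a, retractMap n hn a 1 ⟨n - 1, Nat.sub_one_lt_of_lt hn⟩ = 0) ∧
    (∀ a, a ⟨n - 1, Nat.sub_one_lt_of_lt hn⟩ = 0 → ∀ t, retractMap n hn a t = a) :=
  ⟨continuous_retractMap hn, fun _ _ ↦ separable_coeffPoly_retractMap_iff hn, retractMap_zero hn,
    fun a ↦ by simp [retractMap_apply_last], fun _ ha ↦ retractMap_eq_self_of_last_eq_zero hn ha⟩

/-- Let `n ≥ 2`, let `U ⊆ ℂ^n` be the set of coefficient vectors `a` such that
`p_a(x) = x^n + a_{n−1}x^{n−1} + ⋯ + a_0` has no repeated complex root (equivalently, is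
separable), and let `Z = {a ∈ U : a_{n−1} = 0}`. Then `Φ` is a strong deformation retraction
of `U` onto `Z`: `Φ` is continuous on `U × [0,1]`; `Φ(a,t) ∈ U` for all `(a,t) ∈ U × [0,1]`;
`Φ(a,0) = a`; `Φ(a,1) ∈ Z` (it lies in `U` by the second part, and its `(n−1)`-st coordinate
vanishes); and `Φ(a,t) = a` whenever `a ∈ Z`. -/
theorem maximal_monodromy_stmt17 (n : ℕ) (hn : 2 ≤ n) :
    ContinuousOn (fun x : (Fin n → ℂ) × ℝ => retractMap n (by omega) x.1 x.2)
      ({a : Fin n → ℂ | (coeffPoly n a).Separable} ×ˢ Set.Icc (0:ℝ) 1) ∧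
    (∀ a : Fin n → ℂ, (coeffPoly n a).Separable → ∀ t ∈ Set.Icc (0:ℝ) 1,
      (coeffPoly n (retractMap n (by omega) a t)).Separable) ∧
    (∀ a : Fin n → ℂ, (coeffPoly n a).Separable → retractMap n (by omega) a 0 = a) ∧
    (∀ a : Fin n → ℂ, (coeffPoly n a).Separable →
      retractMap n (by omega) a 1 (⟨n - 1, by omega⟩ : Fin n) = 0) ∧
    (∀ a : Fin n → ℂ, (coeffPoly n a).Separable → a (⟨n - 1, by omega⟩ : Fin n) = 0 →
      ∀ t ∈ Set.Icc (0:ℝ) 1, retractMap n (by omega) a t = a) := by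
  obtain ⟨hcont, hsep, hzero, hone, hfix⟩ := maximal_monodromy_stmt17_general n (by lia)
  exact ⟨hcont.continuousOn, fun a ha t _ ↦ (hsep a t).2 ha, fun a _ ↦ hzero a, fun a _ ↦ hone a,
    fun a _ ha t _ ↦ hfix a ha t⟩
end
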